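/- Let G be a finite simple connected graph with no induced subgraph isomorphic to a hole, the domino D, the graph F, or the graph X5. Then for every pair of non-adjacent vertices u, v, every induced uv-path of length at least 3 dominates every shortest uv-path. -/

import Mathlib

open SimpleGraph

/-- The internal vertices of a walk (support minus the two endpoints). -/
def internals {V : Type*} {G : SimpleGraph V} {u v : V} (W : G.Walk u v) : List V :=
  W.support.tail.dropLast

/-- A `uv`-walk `W` dominates a `uv`-walk `W'` if every internal vertex of `W'`
is adjacent to some internal vertex of `W` or belongs to `W`. -/
def Dominates {V : Type*} (G : SimpleGraph V) {u v : V} (W W' : G.Walk u v) : Prop :=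
  ∀ x ∈ internals W', x ∈ W.support ∨ ∃ y ∈ internals W, G.Adj x y

/-- An induced (chordless) path: a path such that any two vertices on it are
adjacent in `G` only if they are consecutive on the path. -/
def IsInducedPath {V : Type*} (G : SimpleGraph V) {u v : V} (W : G.Walk u v) : Prop :=
  W.IsPath ∧ ∀ a ∈ W.support, ∀ b ∈ W.support, G.Adj a b → W.toSubgraph.Adj a b

/-- `G` contains a hole: an induced (chordless) cycle of length at least 5. -/
def HasHole {V : Type*} (G : SimpleGraph V) : Prop :=
  ∃ (x : V) (c : G.Walk x x), c.IsCycle ∧ 5 ≤ c.length ∧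
    ∀ a ∈ c.support, ∀ b ∈ c.support, G.Adj a b → c.toSubgraph.Adj a b

/-- The house graph: 5-cycle `x0x1x2x3x4` plus the chord `x1x4`. -/
def houseGraph : SimpleGraph (Fin 5) :=
  SimpleGraph.fromEdgeSet {s(0,1), s(1,2), s(2,3), s(3,4), s(4,0), s(1,4)}

/-- The domino: 6-cycle `x0x1x2x3x4x5` plus the chord `x1x4`. -/
def dominoGraph : SimpleGraph (Fin 6) :=
  SimpleGraph.fromEdgeSet {s(0,1), s(1,2), s(2,3), s(3,4), s(4,5), s(5,0), s(1,4)}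

/-- The graph `X5`. -/
def x5Graph : SimpleGraph (Fin 6) :=
  SimpleGraph.fromEdgeSet {s(0,1), s(0,5), s(1,2), s(1,5), s(2,3), s(2,5), s(3,4), s(4,5)}

/-- The graph `F`. -/
def fGraph : SimpleGraph (Fin 7) :=
  SimpleGraph.fromEdgeSet {s(0,1), s(0,6), s(1,2), s(5,6), s(2,6), s(2,3), s(2,5), s(3,4), s(4,5)}


theorem emb_domino {V : Type*} {G : SimpleGraph V} (hD : IsEmpty (dominoGraph ↪g G))
    {a w y z b x : V} (h01 : G.Adj a w) (h12 : G.Adj w y) (h23 : G.Adj y z) (h34 : G.Adj z b)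
    (h45 : G.Adj b x) (h50 : G.Adj x a) (h14 : G.Adj w b)
    (n02 : ¬ G.Adj a y) (n03 : ¬ G.Adj a z) (n04 : ¬ G.Adj a b) (n13 : ¬ G.Adj w z)
    (n15 : ¬ G.Adj w x) (n24 : ¬ G.Adj y b) (n25 : ¬ G.Adj y x) (n35 : ¬ G.Adj z x) : False := by
  have hinj : Function.Injective ![a, w, y, z, b, x] := by
    intro i j h
    fin_cases i <;> fin_cases j <;> simp at h ⊢ <;> subst h <;>
      simp_all [G.adj_comm]
  refine hD.false ⟨⟨![a, w, y, z, b, x], hinj⟩, ?_⟩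
  intro i j
  fin_cases i <;> fin_cases j <;>
    simp [dominoGraph, h01, h12, h23, h34, h45, h50, h14, n02, n03, n04, n13, n15, n24, n25, n35,
      h01.symm, h12.symm, h23.symm, h34.symm, h45.symm, h50.symm, h14.symm,
      mt SimpleGraph.Adj.symm n02, mt SimpleGraph.Adj.symm n03, mt SimpleGraph.Adj.symm n04, mt SimpleGraph.Adj.symm n13, mt SimpleGraph.Adj.symm n15, mt SimpleGraph.Adj.symm n24,
      mt SimpleGraph.Adj.symm n25, mt SimpleGraph.Adj.symm n35]

theorem emb_x5 {V : Type*} {G : SimpleGraph V} (hX : IsEmpty (x5Graph ↪g G))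
    {z y w a x b : V} (h01 : G.Adj z y) (h05 : G.Adj z b) (h12 : G.Adj y w) (h15 : G.Adj y b)
    (h23 : G.Adj w a) (h25 : G.Adj w b) (h34 : G.Adj a x) (h45 : G.Adj x b)
    (n02 : ¬ G.Adj z w) (n03 : ¬ G.Adj z a) (n04 : ¬ G.Adj z x) (n13 : ¬ G.Adj y a)
    (n14 : ¬ G.Adj y x) (n24 : ¬ G.Adj w x) (n35 : ¬ G.Adj a b) : False := by
  have hinj : Function.Injective ![z, y, w, a, x, b] := by
    intro i j h
    fin_cases i <;> fin_cases j <;> simp at h ⊢ <;> subst h <;>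
      simp_all [G.adj_comm]
  refine hX.false ⟨⟨![z, y, w, a, x, b], hinj⟩, ?_⟩
  intro i j
  fin_cases i <;> fin_cases j <;>
    simp [x5Graph, h01, h05, h12, h15, h23, h25, h34, h45, n02, n03, n04, n13, n14, n24, n35,
      h01.symm, h05.symm, h12.symm, h15.symm, h23.symm, h25.symm, h34.symm, h45.symm,
      mt SimpleGraph.Adj.symm n02, mt SimpleGraph.Adj.symm n03, mt SimpleGraph.Adj.symm n04, mt SimpleGraph.Adj.symm n13, mt SimpleGraph.Adj.symm n14, mt SimpleGraph.Adj.symm n24,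
      mt SimpleGraph.Adj.symm n35]

theorem emb_f {V : Type*} {G : SimpleGraph V} (hF : IsEmpty (fGraph ↪g G))
    {t z b x a w y : V} (h01 : G.Adj t z) (h06 : G.Adj t y) (h12 : G.Adj z b) (h56 : G.Adj w y)
    (h26 : G.Adj b y) (h23 : G.Adj b x) (h25 : G.Adj b w) (h34 : G.Adj x a) (h45 : G.Adj a w)
    (n02 : ¬ G.Adj t b) (n03 : ¬ G.Adj t x) (n04 : ¬ G.Adj t a) (n05 : ¬ G.Adj t w)
    (n13 : ¬ G.Adj z x) (n14 : ¬ G.Adj z a) (n15 : ¬ G.Adj z w) (n16 : ¬ G.Adj z y)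
    (n24 : ¬ G.Adj b a) (n35 : ¬ G.Adj x w) (n36 : ¬ G.Adj x y) (n46 : ¬ G.Adj a y) : False := by
  have hinj : Function.Injective ![t, z, b, x, a, w, y] := by
    intro i j h
    fin_cases i <;> fin_cases j <;> simp at h ⊢ <;> subst h <;>
      simp_all [G.adj_comm]
  refine hF.false ⟨⟨![t, z, b, x, a, w, y], hinj⟩, ?_⟩
  intro i j
  fin_cases i <;> fin_cases j <;>
    simp [fGraph, h01, h06, h12, h56, h26, h23, h25, h34, h45, n02, n03, n04, n05, n13, n14, n15,
      n16, n24, n35, n36, n46,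
      h01.symm, h06.symm, h12.symm, h56.symm, h26.symm, h23.symm, h25.symm, h34.symm, h45.symm,
      mt SimpleGraph.Adj.symm n02, mt SimpleGraph.Adj.symm n03, mt SimpleGraph.Adj.symm n04, mt SimpleGraph.Adj.symm n05, mt SimpleGraph.Adj.symm n13, mt SimpleGraph.Adj.symm n14,
      mt SimpleGraph.Adj.symm n15, mt SimpleGraph.Adj.symm n16, mt SimpleGraph.Adj.symm n24, mt SimpleGraph.Adj.symm n35, mt SimpleGraph.Adj.symm n36, mt SimpleGraph.Adj.symm n46]

/-- Walks inside `T` from `y` to a further neighbour of `b`: the nearest one is at distance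
at most two, as otherwise there is a hole. -/
theorem near_nbr {V : Type*} {G : SimpleGraph V} (hhole : ¬ HasHole G) (T : Set V) (b y : V)
    (hb : b ∉ T) (hyb : G.Adj y b)
    (hex : ∃ z, ∃ p : G.Walk y z, G.Adj z b ∧ z ≠ y ∧ ∀ s ∈ p.support, s ∈ T) :
    ∃ z ∈ T, z ≠ y ∧ G.Adj z b ∧
      (G.Adj y z ∨ (¬ G.Adj y z ∧ ∃ t ∈ T, ¬ G.Adj t b ∧ G.Adj y t ∧ G.Adj t z)) := by
  classical
  have hex' : ∃ k : ℕ, ∃ z, ∃ p : G.Walk y z, p.length = k ∧ G.Adj z b ∧ z ≠ y ∧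
      ∀ s ∈ p.support, s ∈ T := by
    obtain ⟨z, p, h⟩ := hex
    exact ⟨_, z, p, rfl, h⟩
  obtain ⟨z, p, hlen, hzb, hzy, hpT⟩ := Nat.find_spec hex'
  have hmin : ∀ z' (q : G.Walk y z'), G.Adj z' b → z' ≠ y → (∀ s ∈ q.support, s ∈ T) →
      p.length ≤ q.length := by
    intro z' q h1 h2 h3
    rw [hlen]
    exact Nat.find_min' hex' ⟨z', q, rfl, h1, h2, h3⟩
  clear hlen
  have hpath : p.IsPath := by
    have h1 := hmin z p.bypass hzb hzy (fun s hs => hpT s (p.support_bypass_subset hs))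
    rw [← p.bypass_eq_self_of_length_le h1]
    exact p.bypass_isPath
  have hchord : ∀ i j, i < j → j ≤ p.length → G.Adj (p.getVert i) (p.getVert j) → j = i + 1 := by
    intro i j hij hj hadj
    have h1 := hmin z (((p.take i).concat hadj).append (p.drop j)) hzb hzy (by
      intro s hs
      rw [Walk.mem_support_append_iff, Walk.support_concat] at hs
      simp only [List.concat_eq_append, List.mem_append, List.mem_singleton] at hs
      rcases hs with (hs | hs) | hs
      · exact hpT s ((p.isSubwalk_take i).support_subset hs)
      · rw [hs]; exact hpT _ (p.getVert_mem_support j)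
      · exact hpT s ((p.isSubwalk_drop j).support_subset hs))
    rw [Walk.length_append, Walk.length_concat, Walk.take_length, Walk.drop_length] at h1
    omega
  have hbadj : ∀ i ≤ p.length, G.Adj (p.getVert i) b → i = 0 ∨ i = p.length := by
    intro i hi hadj
    by_cases h0 : i = 0
    · exact Or.inl h0
    right
    have h1 := hmin _ (p.take i) hadj (by
      intro h
      apply h0
      apply hpath.getVert_injOn (by simpa using hi) (by simp)
      simpa using h) (fun s hs => hpT s ((p.isSubwalk_take i).support_subset hs))
    rw [Walk.take_length] at h1
    omega
  have hz : p.getVert p.length = z := p.getVert_length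
  have h0 : p.getVert 0 = y := p.getVert_zero
  have hk0 : p.length ≠ 0 := by
    intro h
    rw [h] at hz
    exact hzy (hz.symm.trans h0)
  refine ⟨z, hpT z p.end_mem_support, hzy, hzb, ?_⟩
  by_cases hyz : G.Adj y z
  · exact Or.inl hyz
  refine Or.inr ⟨hyz, ?_⟩
  by_cases hk : p.length ≤ 2
  · have e01 := p.adj_getVert_succ (i := 0) (by omega)
    rw [h0] at e01
    have hk2 : p.length = 2 := by
      by_contra hne
      have : p.length = 1 := by omega
      rw [this] at hz
      simp only [zero_add] at e01
      rw [hz] at e01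
      exact hyz e01
    have e12 := p.adj_getVert_succ (i := 1) (by omega)
    simp only [zero_add] at e01
    rw [show 1 + 1 = p.length by omega, hz] at e12
    refine ⟨p.getVert 1, hpT _ (p.getVert_mem_support 1), ?_, e01, e12⟩
    intro h
    have := hbadj 1 (by omega) h
    omega
  exfalso
  apply hhole
  have hbp : b ∉ p.support := fun h => hb (hpT b h)
  have hqpath : (p.concat hzb).IsPath := hpath.concat hbp hzb
  refine ⟨b, Walk.cons hyb.symm (p.concat hzb), ?_, ?_, ?_⟩
  · rw [Walk.cons_isCycle_iff]
    refine ⟨hqpath, ?_⟩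
    rw [Walk.edges_concat]
    simp only [List.concat_eq_append, List.mem_append, List.mem_singleton, not_or]
    refine ⟨fun h => hbp (p.fst_mem_support_of_mem_edges h), ?_⟩
    intro h
    rw [Sym2.eq_swap] at h
    have := Sym2.congr_left.mp h
    exact hzy this.symm
  · simp [Walk.length_concat]; omega
  · have key1 : ∀ s ∈ p.support, G.Adj s b →
        (Walk.cons hyb.symm (p.concat hzb)).toSubgraph.Adj s b := by
      intro s hs hadj
      obtain ⟨i, rfl, hi⟩ := Walk.mem_support_iff_exists_getVert.mp hs
      rw [← Subgraph.mem_edgeSet, Walk.mem_edges_toSubgraph, Walk.edges_cons, Walk.edges_concat]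
      rcases hbadj i hi hadj with h | h
      · subst h; simp [Sym2.eq_swap]
      · subst h; simp
    have key2 : ∀ i j, i < j → j ≤ p.length → G.Adj (p.getVert i) (p.getVert j) →
        (Walk.cons hyb.symm (p.concat hzb)).toSubgraph.Adj (p.getVert i) (p.getVert j) := by
      intro i j hij hj hadj
      have h1 := hchord i j hij hj hadj
      subst h1
      rw [← Subgraph.mem_edgeSet, Walk.mem_edges_toSubgraph, Walk.edges_cons, Walk.edges_concat]
      have h2 := p.toSubgraph_adj_getVert (i := i) (by omega)
      rw [← Subgraph.mem_edgeSet, Walk.mem_edges_toSubgraph] at h2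
      simp [h2]
    have hsup : ∀ s ∈ (Walk.cons hyb.symm (p.concat hzb)).support, s = b ∨ s ∈ p.support := by
      intro s hs
      simp [Walk.support_cons, Walk.support_concat] at hs
      tauto
    intro s hs s' hs' hadj
    rcases hsup s hs with rfl | h1 <;> rcases hsup s' hs' with rfl | h2
    · exact absurd hadj (G.irrefl)
    · exact (key1 _ h2 hadj.symm).symm
    · exact key1 _ h1 hadj
    · obtain ⟨i, rfl, hi⟩ := Walk.mem_support_iff_exists_getVert.mp h1
      obtain ⟨j, rfl, hj⟩ := Walk.mem_support_iff_exists_getVert.mp h2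
      rcases lt_trichotomy i j with h | h | h
      · exact key2 i j h hj hadj
      · subst h; exact absurd hadj (G.irrefl)
      · exact (key2 j i h hi hadj.symm).symm

/-- The finishing argument on the square `a x b w` and the connected part `T`. -/
theorem square_false {V : Type*} {G : SimpleGraph V} (hhole : ¬ HasHole G)
    (hD : IsEmpty (dominoGraph ↪g G)) (hF : IsEmpty (fGraph ↪g G))
    (hX : IsEmpty (x5Graph ↪g G)) (T : Set V) {a x b w y c : V}
    (hax : G.Adj a x) (hxb : G.Adj x b) (hbw : G.Adj b w) (hwa : G.Adj w a)
    (hab : ¬ G.Adj a b) (hxw : ¬ G.Adj x w)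
    (hbT : b ∉ T)
    (haN : ∀ t ∈ T, ¬ G.Adj t a) (hxN : ∀ t ∈ T, ¬ G.Adj t x)
    (hwN : ∀ t ∈ T, G.Adj t w → t = y) (hwy : G.Adj w y)
    (hcy : c ≠ y) (hcb : G.Adj c b) (q : G.Walk y c) (hq : ∀ s ∈ q.support, s ∈ T) : False := by
  have hyT : y ∈ T := hq y q.start_mem_support
  by_cases hyb : G.Adj y b
  · obtain ⟨z, hzT, hzy, hzb, h⟩ := near_nbr hhole T b y hbT hyb ⟨c, q, hcb, hcy, hq⟩
    have hzw : ¬ G.Adj z w := fun h => hzy (hwN z hzT h)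
    rcases h with h | ⟨hyz, t, htT, htb, hyt, htz⟩
    · exact emb_x5 hX (z := z) (y := y) (w := w) (a := a) (x := x) (b := b) h.symm hzb hwy.symm hyb
        hwa hbw.symm hax hxb hzw (haN z hzT) (hxN z hzT) (haN y hyT) (hxN y hyT)
        (fun h => hxw h.symm) hab
    · have htw : ¬ G.Adj t w := fun h => by
        have := hwN t htT h
        subst this
        exact G.irrefl hyt
      exact emb_f hF (t := t) (z := z) (b := b) (x := x) (a := a) (w := w) (y := y)
        htz hyt.symm hzb hwy hyb.symm hxb.symm hbw hax.symm hwa.symm htb (hxN t htT) (haN t htT) htw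
        (hxN z hzT) (haN z hzT) hzw (fun h => hyz h.symm) (fun h => hab h.symm) hxw
        (fun h => hxN y hyT h.symm) (fun h => haN y hyT h.symm)
  · have hwb : w ∉ T := fun h => haN w h hwa
    obtain ⟨z, hzT, hzy, hzb, h⟩ := near_nbr hhole (insert w T) b w
      (by
        rintro (h | h)
        · exact hbw.ne h
        · exact hbT h) hbw.symm
      ⟨c, Walk.cons hwy q, hcb, (by
        rintro rfl
        exact hwb (hq _ q.end_mem_support)), by
        intro s hs
        rw [Walk.support_cons, List.mem_cons] at hs
        rcases hs with rfl | hs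
        · exact Or.inl rfl
        · exact Or.inr (hq s hs)⟩
    have hzT : z ∈ T := hzT.resolve_left hzy
    rcases h with h | ⟨hwz, t, htT, htb, hwt, htz⟩
    · have := hwN z hzT h.symm
      subst this
      exact hyb hzb
    · have htT : t ∈ T := htT.resolve_left hwt.ne'
      have := hwN t htT hwt.symm
      subst this
      exact emb_domino hD (a := a) (w := w) (y := t) (z := z) (b := b) (x := x) hwa.symm hwt htz hzb
        hxb.symm hax.symm hbw.symm (fun h => haN t htT h.symm) (fun h => haN z hzT h.symm) hab hwz
        (fun h => hxw h.symm) htb (hxN t htT) (hxN z hzT)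

theorem seg_walk {V : Type*} {G : SimpleGraph V} (f : ℕ → V) (i m : ℕ) 
    (h : ∀ k, i ≤ k → k < i + m → G.Adj (f k) (f (k + 1))) :
    ∃ p : G.Walk (f i) (f (i + m)), ∀ s ∈ p.support, ∃ k, i ≤ k ∧ k ≤ i + m ∧ s = f k := by
  induction m with
  | zero => exact ⟨Walk.nil, by intro s hs; simp at hs; exact ⟨i, le_rfl, le_rfl, hs⟩⟩
  | succ m ih =>
    obtain ⟨p, hp⟩ := ih (fun k h1 h2 => h k h1 (by omega))
    refine ⟨p.concat (h (i + m) (by omega) (by omega)), ?_⟩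
    intro s hs
    rw [Walk.support_concat] at hs
    simp only [List.concat_eq_append, List.mem_append, List.mem_singleton] at hs
    rcases hs with hs | hs
    · obtain ⟨k, h1, h2, h3⟩ := hp s hs
      exact ⟨k, h1, by omega, h3⟩
    · exact ⟨i + m + 1, by omega, by omega, hs⟩

theorem seg_walk' {V : Type*} {G : SimpleGraph V} (f : ℕ → V) (i j : ℕ) (hij : i ≤ j)
    (h : ∀ k, i ≤ k → k < j → G.Adj (f k) (f (k + 1))) :
    ∃ p : G.Walk (f i) (f j), ∀ s ∈ p.support, ∃ k, i ≤ k ∧ k ≤ j ∧ s = f k := by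
  obtain ⟨m, rfl⟩ := Nat.exists_eq_add_of_le hij
  exact seg_walk f i m h

/-- Combinatorial data: an induced path `w 0, …, w n` and a geodesic `p 0, …, p d` with the same
ends, a level function `l`, and an undominated vertex `p (i + 1)` on the geodesic. -/
structure PathData {V : Type*} (G : SimpleGraph V) (w p : ℕ → V) (n d i : ℕ) (l : V → ℕ) :
    Prop where
  start : w 0 = p 0
  fin : w n = p d
  wadj : ∀ k, k < n → G.Adj (w k) (w (k + 1))
  wind : ∀ k m, k < m → m ≤ n → G.Adj (w k) (w m) → m = k + 1
  padj : ∀ k, k < d → G.Adj (p k) (p (k + 1))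
  lev : ∀ k, k ≤ d → l (p k) = k
  lip : ∀ s t, G.Adj s t → l s ≤ l t + 1
  hid : i + 2 ≤ d
  notw : ∀ k, k ≤ n → p (i + 1) ≠ w k
  undom : ∀ k, 0 < k → k < n → ¬ G.Adj (w k) (p (i + 1))

namespace PathData

variable {V : Type*} {G : SimpleGraph V} {w p : ℕ → V} {n d i : ℕ} {l : V → ℕ}

theorem padj_iff (h : PathData G w p n d i l) {k m : ℕ} (hk : k ≤ d) (hm : m ≤ d)
    (hadj : G.Adj (p k) (p m)) : k ≤ m + 1 ∧ m ≤ k + 1 ∧ k ≠ m := by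
  have h1 := h.lip _ _ hadj
  have h2 := h.lip _ _ hadj.symm
  rw [h.lev k hk, h.lev m hm] at h1 h2
  refine ⟨h1, h2, ?_⟩
  rintro rfl
  exact G.irrefl hadj

theorem pinj (h : PathData G w p n d i l) {k m : ℕ} (hk : k ≤ d) (hm : m ≤ d)
    (he : p k = p m) : k = m := by
  rw [← h.lev k hk, ← h.lev m hm, he]

/-- Neighbours on `W` of the undominated vertex are ends. -/
theorem xw (h : PathData G w p n d i l) {k : ℕ} (hk : k ≤ n) (hadj : G.Adj (w k) (p (i + 1))) :
    w k = p i ∨ w k = p (i + 2) := by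
  have hid := h.hid
  rcases Nat.eq_zero_or_pos k with rfl | h0
  · left
    rw [h.start] at hadj ⊢
    have := h.padj_iff (by omega) (by omega) hadj
    congr 1; omega
  rcases Nat.lt_or_eq_of_le hk with h1 | rfl
  · exact absurd hadj (h.undom k h0 h1)
  · right
    rw [h.fin] at hadj ⊢
    have := h.padj_iff (by omega) (by omega) hadj
    congr 1; omega

/-- A connected set containing the two neighbours of `x = p (i + 1)`, consisting of vertices of
the two paths other than `x`, contains a common neighbour of them lying on `W`. -/
theorem common (h : PathData G w p n d i l) (hhole : ¬ HasHole G) (S : Set V)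
    (hS : ∀ s ∈ S, (∃ k, k ≤ d ∧ k ≠ i + 1 ∧ s = p k) ∨ ∃ k, k ≤ n ∧ s = w k)
    (q : G.Walk (p i) (p (i + 2))) (hq : ∀ s ∈ q.support, s ∈ S) :
    ∃ k, k ≤ n ∧ w k ∈ S ∧ G.Adj (p i) (w k) ∧ G.Adj (w k) (p (i + 2)) := by
  have hid := h.hid
  obtain ⟨z, hzS, hza, hzx, hz⟩ := near_nbr hhole S (p (i + 1)) (p i) (by
      intro hx
      rcases hS _ hx with ⟨k, h1, h2, h3⟩ | ⟨k, h1, h2⟩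
      · exact h2 (h.pinj (by omega) h1 h3).symm
      · exact h.notw k h1 h2) (h.padj i (by omega))
    ⟨p (i + 2), q, (h.padj (i + 1) (by omega)).symm,
      fun he => by have := h.pinj (by omega) (by omega) he; omega, hq⟩
  have hzb : z = p (i + 2) := by
    rcases hS z hzS with ⟨k, h1, h2, rfl⟩ | ⟨k, h1, rfl⟩
    · have := h.padj_iff h1 (by omega) hzx
      have h3 : k ≠ i := by rintro rfl; exact hza rfl
      congr 1; omega
    · exact (h.xw h1 hzx).resolve_left hza
  subst hzb
  rcases hz with hz | ⟨-, t, htS, htx, hat, htb⟩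
  · have := h.padj_iff (by omega) (by omega) hz
    omega
  rcases hS t htS with ⟨k, h1, h2, rfl⟩ | ⟨k, h1, rfl⟩
  · have h3 := h.padj_iff (by omega) (by omega) hat
    have h4 := h.padj_iff (by omega) (by omega) htb
    omega
  · exact ⟨k, h1, htS, hat, htb⟩

theorem exists_common (h : PathData G w p n d i l) (hhole : ¬ HasHole G) :
    ∃ k, k ≤ n ∧ G.Adj (p i) (w k) ∧ G.Adj (w k) (p (i + 2)) := by
  have hid := h.hid
  obtain ⟨q1, hq1⟩ := seg_walk' p 0 i (by omega) (fun k _ _ => h.padj k (by omega))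
  obtain ⟨q2, hq2⟩ := seg_walk' w 0 n (by omega) (fun k _ _ => h.wadj k (by omega))
  obtain ⟨q3, hq3⟩ := seg_walk' p (i + 2) d (by omega) (fun k _ _ => h.padj k (by omega))
  obtain ⟨k, h1, -, h2⟩ := h.common hhole
    {s | (∃ k, k ≤ d ∧ k ≠ i + 1 ∧ s = p k) ∨ ∃ k, k ≤ n ∧ s = w k} (fun s hs => hs)
    (q1.reverse.append ((q2.copy h.start h.fin).append q3.reverse)) (by
      intro s hs
      simp only [Walk.mem_support_append_iff, Walk.support_reverse, List.mem_reverse,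
        Walk.support_copy] at hs
      rcases hs with hs | hs | hs
      · obtain ⟨k, h1, h2, h3⟩ := hq1 s hs
        exact Or.inl ⟨k, by omega, by omega, h3⟩
      · obtain ⟨k, h1, h2, h3⟩ := hq2 s hs
        exact Or.inr ⟨k, by omega, h3⟩
      · obtain ⟨k, h1, h2, h3⟩ := hq3 s hs
        exact Or.inl ⟨k, by omega, by omega, h3⟩)
  exact ⟨k, h1, h2⟩

theorem exists_last (h : PathData G w p n d i l) (hhole : ¬ HasHole G) :
    ∃ j, j ≤ n ∧ G.Adj (p i) (w j) ∧ G.Adj (w j) (p (i + 2)) ∧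
      ∀ k, j < k → k ≤ n → ¬ G.Adj (p i) (w k) := by
  classical
  have hid := h.hid
  obtain ⟨k0, hk0, hk1, -⟩ := h.exists_common hhole
  have hspec := Nat.findGreatest_spec (P := fun k => G.Adj (p i) (w k)) hk0 hk1
  have hle := Nat.findGreatest_le (P := fun k => G.Adj (p i) (w k)) n
  have hmax : ∀ k, Nat.findGreatest (fun k => G.Adj (p i) (w k)) n < k → k ≤ n →
      ¬ G.Adj (p i) (w k) := fun k h1 h2 => Nat.findGreatest_is_greatest h1 h2
  generalize Nat.findGreatest (fun k => G.Adj (p i) (w k)) n = j at hspec hle hmax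
  refine ⟨j, hle, hspec, ?_, hmax⟩
  obtain ⟨q2, hq2⟩ := seg_walk' w j n (by omega) (fun k _ _ => h.wadj k (by omega))
  obtain ⟨q3, hq3⟩ := seg_walk' p (i + 2) d (by omega) (fun k _ _ => h.padj k (by omega))
  obtain ⟨k, h1, hkS, hka, hkb⟩ := h.common hhole
    {s | s = p i ∨ (∃ k, i + 2 ≤ k ∧ k ≤ d ∧ s = p k) ∨ ∃ k, j ≤ k ∧ k ≤ n ∧ s = w k} (by
      rintro s (hs | ⟨k, h1, h2, h3⟩ | ⟨k, h1, h2, h3⟩)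
      · exact Or.inl ⟨i, by omega, by omega, hs⟩
      · exact Or.inl ⟨k, by omega, by omega, h3⟩
      · exact Or.inr ⟨k, by omega, h3⟩)
    (Walk.cons hspec ((q2.copy rfl h.fin).append q3.reverse)) (by
      intro s hs
      simp only [Walk.support_cons, List.mem_cons, Walk.mem_support_append_iff,
        Walk.support_reverse, List.mem_reverse, Walk.support_copy] at hs
      rcases hs with hs | hs | hs
      · exact Or.inl hs
      · exact Or.inr (Or.inr (hq2 s hs))
      · exact Or.inr (Or.inl (hq3 s hs)))
  rcases hkS with hs | ⟨m, h1, h2, h3⟩ | ⟨m, h1, h2, h3⟩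
  · rw [hs] at hka; exact absurd hka G.irrefl
  · rw [h3] at hka
    have := h.padj_iff (by omega) (by omega) hka
    omega
  · rw [h3] at hka hkb
    rcases Nat.lt_or_eq_of_le h1 with h4 | rfl
    · exact absurd hka (hmax m h4 h2)
    · exact hkb

theorem false_of_lt (h : PathData G w p n d i l) (hhole : ¬ HasHole G)
    (hD : IsEmpty (dominoGraph ↪g G)) (hF : IsEmpty (fGraph ↪g G))
    (hX : IsEmpty (x5Graph ↪g G)) (hlt : i + 3 ≤ d) : False := by
  have hid := h.hid
  obtain ⟨j, hjn, haj, hjb, hmax⟩ := h.exists_last hhole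
  have hl1 := h.lip _ _ haj.symm
  have hl2 := h.lip _ _ hjb.symm
  rw [h.lev _ (by omega)] at hl1 hl2
  have hj0 : j ≠ 0 := by
    rintro rfl
    rw [h.start, h.lev _ (by omega)] at hl2
    omega
  have hjn' : j < n := by
    rcases Nat.lt_or_eq_of_le hjn with h1 | rfl
    · exact h1
    · rw [h.fin, h.lev _ (by omega)] at hl1
      omega
  obtain ⟨q2, hq2⟩ := seg_walk' w (j + 1) n (by omega) (fun k _ _ => h.wadj k (by omega))
  obtain ⟨q3, hq3⟩ := seg_walk' p (i + 3) d (by omega) (fun k _ _ => h.padj k (by omega))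
  have hwp : ∀ k, i + 3 ≤ k → k ≤ d → ¬ G.Adj (p k) (w j) := by
    intro k h1 h2 hadj
    have := h.lip _ _ hadj
    rw [h.lev _ h2] at this
    omega
  refine square_false hhole hD hF hX
    {s | (∃ k, i + 3 ≤ k ∧ k ≤ d ∧ s = p k) ∨ ∃ k, j + 1 ≤ k ∧ k ≤ n ∧ s = w k}
    (a := p i) (x := p (i + 1)) (b := p (i + 2)) (w := w j) (y := w (j + 1)) (c := p (i + 3))
    (h.padj _ (by omega)) (h.padj _ (by omega)) hjb.symm haj.symm ?_ ?_ ?_ ?_ ?_ ?_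
    (h.wadj j hjn') ?_ (h.padj _ (by omega)).symm ((q2.copy rfl h.fin).append q3.reverse) ?_
  · intro hadj
    have := h.padj_iff (by omega) (by omega) hadj
    omega
  · exact fun hadj => h.undom j (by omega) hjn' hadj.symm
  · rintro (⟨k, h1, h2, h3⟩ | ⟨k, h1, h2, h3⟩)
    · have := h.pinj (by omega) (by omega) h3
      omega
    · rcases Nat.lt_or_eq_of_le h2 with h4 | rfl
      · apply h.undom k (by omega) h4
        rw [← h3]
        exact (h.padj _ (by omega)).symm
      · rw [h.fin] at h3
        have := h.pinj (by omega) (by omega) h3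
        omega
  · rintro t (⟨k, h1, h2, rfl⟩ | ⟨k, h1, h2, rfl⟩) hadj
    · have := h.padj_iff (by omega) (by omega) hadj
      omega
    · exact hmax k (by omega) h2 hadj.symm
  · rintro t (⟨k, h1, h2, rfl⟩ | ⟨k, h1, h2, rfl⟩) hadj
    · have := h.padj_iff (by omega) (by omega) hadj
      omega
    · rcases Nat.lt_or_eq_of_le h2 with h4 | rfl
      · exact h.undom k (by omega) h4 hadj
      · rw [h.fin] at hadj
        have := h.padj_iff (by omega) (by omega) hadj
        omega
  · rintro t (⟨k, h1, h2, rfl⟩ | ⟨k, h1, h2, rfl⟩) hadj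
    · exact absurd hadj (hwp k h1 h2)
    · rw [h.wind j k (by omega) h2 hadj.symm]
  · intro he
    apply hwp (i + 3) le_rfl hlt
    rw [he]
    exact (h.wadj j hjn').symm
  · intro s hs
    simp only [Walk.mem_support_append_iff, Walk.support_reverse, List.mem_reverse,
      Walk.support_copy] at hs
    rcases hs with hs | hs
    · exact Or.inr (hq2 s hs)
    · exact Or.inl (hq3 s hs)

theorem false_of_two (h : PathData G w p n d i l) (hhole : ¬ HasHole G)
    (hi : i = 0) (hd : d = 2) (hn : 3 ≤ n) : False := by
  subst hi hd
  obtain ⟨k, hk, h1, h2⟩ := h.exists_common hhole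
  rw [← h.start] at h1
  rw [zero_add, ← h.fin] at h2
  have h0 : k ≠ 0 := by rintro rfl; exact G.irrefl h1
  have h0' : k ≠ n := by rintro rfl; exact G.irrefl h2
  have := h.wind 0 k (by omega) hk h1
  have := h.wind k n (by omega) le_rfl h2
  omega

end PathData

/-- An undominated vertex of a geodesic yields the combinatorial data. -/
theorem pathData_of {V : Type*} {G : SimpleGraph V} (hc : G.Connected) {u v : V}
    (W P : G.Walk u v) (hW : IsInducedPath G W) (hP : P.length = G.dist u v) (i : ℕ)
    (hi : i + 2 ≤ P.length) (hx : P.getVert (i + 1) ∉ W.support)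
    (hun : ∀ k, 0 < k → k < W.length → ¬ G.Adj (W.getVert k) (P.getVert (i + 1))) :
    PathData G W.getVert P.getVert W.length P.length i (G.dist u) where
  start := by simp
  fin := by simp
  wadj k hk := W.adj_getVert_succ hk
  wind k m hkm hm hadj := by
    have h1 := hW.2 _ (W.getVert_mem_support k) _ (W.getVert_mem_support m) hadj
    rw [Walk.toSubgraph_adj_iff] at h1
    obtain ⟨r, hr, hrl⟩ := h1
    have inj : ∀ s t, s ≤ W.length → t ≤ W.length → W.getVert s = W.getVert t → s = t :=
      fun s t hs ht he => hW.1.getVert_injOn hs ht he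
    rw [Sym2.eq_iff] at hr
    rcases hr with ⟨e1, e2⟩ | ⟨e1, e2⟩
    · have := inj _ _ (by omega) (by omega) e1
      have := inj _ _ (by omega) (by omega) e2
      omega
    · have := inj _ _ (by omega) (by omega) e1
      have := inj _ _ (by omega) (by omega) e2
      omega
  padj k hk := P.adj_getVert_succ hk
  lev k hk := by
    have h1 : G.dist u (P.getVert k) ≤ k := by
      have := dist_le (P.take k)
      rw [Walk.take_length] at this
      omega
    have h2 : G.dist (P.getVert k) v ≤ P.length - k := by
      have := dist_le (P.drop k)
      rwa [Walk.drop_length] at this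
    have h3 := hc.dist_triangle (u := u) (v := P.getVert k) (w := v)
    omega
  lip s t hadj := by
    have h3 := hc.dist_triangle (u := u) (v := t) (w := s)
    have := dist_eq_one_iff_adj.mpr hadj.symm
    omega
  hid := hi
  notw k hk he := hx (he ▸ W.getVert_mem_support k)
  undom := hun

theorem mem_internals {V : Type*} {G : SimpleGraph V} {u v : V} (W : G.Walk u v) (x : V) :
    x ∈ internals W ↔ ∃ k, 0 < k ∧ k < W.length ∧ W.getVert k = x := by
  unfold internals
  rw [List.mem_iff_getElem]
  constructor
  · rintro ⟨k, hk, rfl⟩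
    have hk' : k < W.length - 1 := by simpa using hk
    refine ⟨k + 1, by omega, by omega, ?_⟩
    rw [List.getElem_dropLast, List.getElem_tail, Walk.getVert_eq_support_getElem _ (by omega)]
  · rintro ⟨k, h0, hk, rfl⟩
    obtain ⟨m, rfl⟩ : ∃ m, k = m + 1 := ⟨k - 1, by omega⟩
    refine ⟨m, by simp; omega, ?_⟩
    rw [List.getElem_dropLast, List.getElem_tail, Walk.getVert_eq_support_getElem _ (by omega)]

theorem forbidden_free_m3_dominates_sp {V : Type*} [Fintype V] (G : SimpleGraph V)
    (hc : G.Connected) (hhole : ¬ HasHole G)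
    (hD : IsEmpty (dominoGraph ↪g G)) (hF : IsEmpty (fGraph ↪g G))
    (hX : IsEmpty (x5Graph ↪g G))
    (u v : V) (huv : ¬ G.Adj u v) (W W' : G.Walk u v)
    (hW : IsInducedPath G W) (h3 : 3 ≤ W.length)
    (hW' : W'.IsPath) (hsp : W'.length = G.dist u v) :
    Dominates G W W' := by
  intro x hx
  rw [mem_internals] at hx
  obtain ⟨m, hm0, hmd, rfl⟩ := hx
  obtain ⟨i, rfl⟩ : ∃ i, m = i + 1 := ⟨m - 1, by omega⟩
  by_contra hcon
  rw [not_or] at hcon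
  obtain ⟨hxW, hun⟩ := hcon
  have hun' : ∀ k, 0 < k → k < W.length → ¬ G.Adj (W.getVert k) (W'.getVert (i + 1)) :=
    fun k h1 h2 hadj => hun ⟨_, (mem_internals W _).mpr ⟨k, h1, h2, rfl⟩, hadj.symm⟩
  have D1 := pathData_of hc W W' hW hsp i (by omega) hxW hun'
  by_cases hlt : i + 3 ≤ W'.length
  · exact D1.false_of_lt hhole hD hF hX hlt
  by_cases hi : i = 0
  · exact D1.false_of_two hhole hi (by omega) h3
  have hWr : IsInducedPath G W.reverse := by
    refine ⟨hW.1.reverse, ?_⟩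
    intro a ha b hb hadj
    rw [Walk.toSubgraph_reverse]
    exact hW.2 a (by simpa using ha) b (by simpa using hb) hadj
  have hvert : W'.reverse.getVert (0 + 1) = W'.getVert (i + 1) := by
    rw [Walk.getVert_reverse]
    congr 1
    omega
  have D2 := pathData_of hc W.reverse W'.reverse hWr
    (by rw [Walk.length_reverse, hsp, dist_comm]) 0 (by rw [Walk.length_reverse]; omega)
    (by rw [hvert]; simpa using hxW)
    (by
      intro k h1 h2
      rw [Walk.length_reverse] at h2
      rw [hvert, Walk.getVert_reverse]
      exact hun' _ (by omega) (by omega))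
  exact D2.false_of_lt hhole hD hF hX (by rw [Walk.length_reverse]; omega)
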